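/- Key embedding in the proof of the variable-exponent Jawerth theorem: Let n ∈ ℕ, ε > 0 and let p ∈ P^{log}(ℝⁿ) with sup p < ∞. Then f^{(n/p(·))·(ε/(1+ε))}_{p(·),∞}(ℝⁿ) ↪ b^{0}_{(1+ε)p(·),p(·)}(ℝⁿ): there exists C > 0 such that for every complex-valued sequence γ = (γ_{j,m})_{j∈ℕ₀,m∈ℤⁿ}, ‖γ | b^{0}_{(1+ε)p(·),p(·)}(ℝⁿ)‖ ≤ C ‖h | L_{p(·)}(ℝⁿ)‖, where h(x) := sup_{j∈ℕ₀, m∈ℤⁿ} 2^{(jn/p(x))·(ε/(1+ε))} |γ_{j,m}| χ_{j,m}(x). -/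

import Mathlib

open MeasureTheory ENNReal NNReal

noncomputable section

/-- The dyadic cube `Q_{j,m}` in `ℝⁿ`: centered at `2^{-j} m`, with sides parallel to the
coordinate axes and side length `2^{-j}`. -/
def Qcube (n : ℕ) (j : ℕ) (m : Fin n → ℤ) : Set (EuclideanSpace ℝ (Fin n)) :=
  {x | ∀ i, (2 : ℝ) ^ (-(j : ℝ)) * ((m i : ℝ) - 1 / 2) ≤ x i ∧
        x i < (2 : ℝ) ^ (-(j : ℝ)) * ((m i : ℝ) + 1 / 2)}

/-- A function `g : ℝⁿ → ℝ` is globally log-Hölder continuous if there are `c > 0` and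
`g_∞ ∈ ℝ` with `|g(x) − g(y)| ≤ c / log(e + 1/|x−y|)` and
`|g(x) − g_∞| ≤ c / log(e + |x|)` for all `x, y`. -/
def GlobLogHolder {n : ℕ} (g : EuclideanSpace ℝ (Fin n) → ℝ) : Prop :=
  (∃ c : ℝ, 0 < c ∧ ∀ x y, |g x - g y| ≤ c / Real.log (Real.exp 1 + 1 / dist x y)) ∧
  (∃ c : ℝ, 0 < c ∧ ∃ g₀ : ℝ, ∀ x, |g x - g₀| ≤ c / Real.log (Real.exp 1 + ‖x‖))

/-- The Luxemburg quasinorm `‖g | L_{p(·)}(ℝⁿ)‖ = inf {λ > 0 : ∫ (g(x)/λ)^{p(x)} dx ≤ 1}`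
for a real-valued bounded exponent `p`. -/
def luxNormR {n : ℕ} (p : EuclideanSpace ℝ (Fin n) → ℝ)
    (g : EuclideanSpace ℝ (Fin n) → ℝ≥0∞) : ℝ≥0∞ :=
  sInf {lam : ℝ≥0∞ | 0 < lam ∧ (∫⁻ x, (g x / lam) ^ p x) ≤ 1}

/-- The sum `g_j = Σ_m |γ_{j,m}| χ_{j,m}`. -/
def gBlock {n : ℕ} (γ : ℕ → (Fin n → ℤ) → ℂ) (j : ℕ)
    (x : EuclideanSpace ℝ (Fin n)) : ℝ≥0∞ :=
  ∑' m : Fin n → ℤ, (‖γ j m‖₊ : ℝ≥0∞) * (Qcube n j m).indicator (fun _ => (1 : ℝ≥0∞)) x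

/-- The Besov sequence quasinorm `‖γ | b^0_{(1+ε)p(·),p(·)}(ℝⁿ)‖`, written (for `sup p < ∞`)
as `inf {μ > 0 : Σ_j ‖ |g_j/μ|^{p(·)} | L_{1+ε} ‖ ≤ 1}` with `g_j = Σ_m |γ_{j,m}| χ_{j,m}`. -/
def bNormZero {n : ℕ} (ε : ℝ) (p : EuclideanSpace ℝ (Fin n) → ℝ)
    (γ : ℕ → (Fin n → ℤ) → ℂ) : ℝ≥0∞ :=
  sInf {mu : ℝ≥0∞ | 0 < mu ∧
    (∑' j : ℕ, (∫⁻ x, ((gBlock γ j x / mu) ^ p x) ^ (1 + ε)) ^ (1 / (1 + ε))) ≤ 1}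

/-!
Write `q = 1 + ε`, `θ = ε / q`, so that `1 / q + θ = 1`. The half-open cubes of level `j` partition
`ℝⁿ`, so `g_j` takes at `x` the value `|γ_{j,m}|` for the unique cube `Q_{j,m}` containing `x`. By
homogeneity assume `∫ H ≤ 1` with `H = h ^ p = sup_j 2^{jnθ} G_j`, `G_j = g_j ^ p`; the claim is then
a bound for `∑_j ‖G_j‖_q` by a constant (`modular_bound`), and a multiple `C` of the Luxemburg norm
divides this modular by at least `C ^ c`.

**Reduction to step functions.** On a cube of level `j`, log-Hölder continuity gives
`|p x - p y| ≤ L / j` (`exponent_osc`), and `∫ H ≤ 1` gives `g_j ≤ 2^{jR}`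
(`coeff_le_of_lintegral_le_one`). Where `g_j ≥ 2^{-j}`, it follows that `G_j` is at most a constant
times its infimum `v_j` over the cube (`rpow_comparison`). Where `g_j ≤ 2^{-j}`, one has
`G_j ^ q ≤ 2^{-jcε} G_j`, whose integral is at most `2^{-jcε}`, which is summable after taking the
power `1 / q`. In particular only the local part of the log-Hölder condition plays a role.

**Step functions.** Let `T_j = 2^{jnθ} v_j` and `W = sup_j T_j ≤ H`. The embedding
`L_{q,1} ↪ L_q` (`lorentz_bound`) yields
`∑_j ‖v_j‖_q ≲ ∫_0^∞ ∑_j 2^{-jnθ} |{T_j > t}|^{1/q} dt`.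
Since `{T_j > t}` is a union of cubes of level `j`, it is null or has measure at least `2^{-jn}`, and
it has measure at most `D(t) = |{W > t}|`. Only indices with `2^{-jn} ≤ D(t)` contribute, so the
geometric sum is at most a constant times `D(t)^{θ + 1/q} = D(t)` (`geom_sum_bound`), and
`∫_0^∞ D(t) dt = ∫ W ≤ 1` (`level_set_sum`).
-/

/-! ### Level sets and the Lorentz embedding -/

/-- The embedding `L_{q,1} ↪ L_q`. It follows from the layer cake formula and
`t · μ{f > t}^{1/q} ≤ ∫_0^t μ{f > s}^{1/q} ds`. -/
theorem lorentz_bound {α : Type*} [MeasurableSpace α] (μ : Measure α) {q : ℝ} (hq : 1 < q)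
    (f : α → ℝ) (hf : Measurable f) (hf0 : ∀ x, 0 ≤ f x) :
    (∫⁻ x, ENNReal.ofReal (f x ^ q) ∂μ) ^ (1 / q) ≤
      ENNReal.ofReal q ^ (1 / q) * ∫⁻ t in Set.Ioi (0 : ℝ), μ {x | t < f x} ^ (1 / q) := by
  have hq0 : 0 < q := by linarith
  set A := ∫⁻ t in Set.Ioi (0 : ℝ), μ {x | t < f x} ^ (1 / q) with hA
  have key : ∀ t ∈ Set.Ioi (0 : ℝ), μ {x | t < f x} * ENNReal.ofReal (t ^ (q - 1)) ≤
      A ^ (q - 1) * μ {x | t < f x} ^ (1 / q) := by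
    intro t ht
    have ht : 0 < t := ht
    have h1 : ENNReal.ofReal t * μ {x | t < f x} ^ (1 / q) ≤ A := by
      calc ENNReal.ofReal t * μ {x | t < f x} ^ (1 / q)
          = ∫⁻ _ in Set.Ioc (0 : ℝ) t, μ {x | t < f x} ^ (1 / q) := by
            rw [setLIntegral_const, Real.volume_Ioc, sub_zero, mul_comm]
        _ ≤ ∫⁻ s in Set.Ioc (0 : ℝ) t, μ {x | s < f x} ^ (1 / q) := by
            refine setLIntegral_mono' measurableSet_Ioc fun s hs => ?_
            refine ENNReal.rpow_le_rpow (measure_mono fun x hx => ?_) (by positivity)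
            exact lt_of_le_of_lt hs.2 hx
        _ ≤ A := lintegral_mono_set Set.Ioc_subset_Ioi_self
    have h2 : μ {x | t < f x} =
        μ {x | t < f x} ^ (1 / q) * (μ {x | t < f x} ^ (1 / q)) ^ (q - 1) := by
      rw [← ENNReal.rpow_mul, ← ENNReal.rpow_add_of_nonneg _ _ (by positivity)
        (mul_nonneg (by positivity) (by linarith))]
      have : 1 / q + 1 / q * (q - 1) = 1 := by field_simp; ring
      rw [this, ENNReal.rpow_one]
    calc μ {x | t < f x} * ENNReal.ofReal (t ^ (q - 1))
        = (ENNReal.ofReal t * μ {x | t < f x} ^ (1 / q)) ^ (q - 1)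
            * μ {x | t < f x} ^ (1 / q) := by
          rw [ENNReal.mul_rpow_of_nonneg _ _ (by linarith : 0 ≤ q - 1),
            ENNReal.ofReal_rpow_of_pos ht]
          conv_lhs => rw [h2]
          ring
      _ ≤ _ := by gcongr
  have hmain : ∫⁻ x, ENNReal.ofReal (f x ^ q) ∂μ ≤ ENNReal.ofReal q * A ^ q := by
    rw [lintegral_rpow_eq_lintegral_meas_lt_mul μ (Filter.Eventually.of_forall hf0)
      hf.aemeasurable hq0]
    gcongr
    calc _ ≤ ∫⁻ t in Set.Ioi (0 : ℝ), A ^ (q - 1) * μ {x | t < f x} ^ (1 / q) :=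
          setLIntegral_mono' measurableSet_Ioi key
      _ = A ^ (q - 1) * A := by
          rw [lintegral_const_mul]
          refine Measurable.pow_const (Antitone.measurable fun s t hst => ?_) _
          exact measure_mono fun x hx => lt_of_le_of_lt hst hx
      _ = A ^ q := by
          conv_lhs => rw [← ENNReal.rpow_one A, ← ENNReal.rpow_mul, one_mul,
            ← ENNReal.rpow_add_of_nonneg _ _ (by linarith) zero_le_one]
          congr 1; ring
  calc _ ≤ (ENNReal.ofReal q * A ^ q) ^ (1 / q) := by gcongr
    _ = _ := by
      rw [ENNReal.mul_rpow_of_nonneg _ _ (by positivity), ← ENNReal.rpow_mul,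
        mul_one_div_cancel hq0.ne', ENNReal.rpow_one]

/-- A geometric sum restricted to the indices with `ρ ^ j ≤ D` is controlled by its first term,
hence by `D ^ θ`. -/
theorem geom_sum_bound {ρ D : ℝ≥0∞} {θ : ℝ} (hθ : 0 < θ) (d : ℕ → ℝ≥0∞) {s : ℝ}
    (hs : 0 < s) (hsθ : s + θ = 1) (hd : ∀ j, d j ≤ D) (hd' : ∀ j, d j = 0 ∨ ρ ^ j ≤ d j) :
    ∑' j, (ρ ^ θ) ^ j * d j ^ s ≤ (1 - ρ ^ θ)⁻¹ * D := by
  by_cases hex : ∃ j, d j ≠ 0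
  · classical
    set k := Nat.find hex with hk
    have hkD : ρ ^ k ≤ D := ((hd' k).resolve_left (Nat.find_spec hex)).trans (hd k)
    have hlow : ∀ j, j < k → d j = 0 := fun j hj => by
      simpa using Nat.find_min hex hj
    have hsum : ∑' j, (ρ ^ θ) ^ j * d j ^ s = ∑' i, (ρ ^ θ) ^ (i + k) * d (i + k) ^ s := by
      rw [← ENNReal.summable.sum_add_tsum_nat_add' (k := k) (f := fun j => (ρ ^ θ) ^ j * d j ^ s),
        Finset.sum_eq_zero, zero_add]
      intro j hj
      rw [hlow j (Finset.mem_range.1 hj), ENNReal.zero_rpow_of_pos hs, mul_zero]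
    rw [hsum]
    calc ∑' i, (ρ ^ θ) ^ (i + k) * d (i + k) ^ s
        ≤ ∑' i, (ρ ^ θ) ^ i * (D ^ θ * D ^ s) := by
          refine ENNReal.tsum_le_tsum fun i => ?_
          rw [pow_add, mul_assoc]
          gcongr
          · rw [← ENNReal.rpow_natCast, ← ENNReal.rpow_mul, mul_comm, ENNReal.rpow_mul,
              ENNReal.rpow_natCast]
            gcongr
          · exact hd _
      _ = (1 - ρ ^ θ)⁻¹ * D := by
          rw [ENNReal.tsum_mul_right, ENNReal.tsum_geometric,
            ← ENNReal.rpow_add_of_nonneg _ _ hθ.le hs.le, add_comm θ s, hsθ, ENNReal.rpow_one]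
  · push Not at hex
    simp [hex, ENNReal.zero_rpow_of_pos hs]

/-- The summation step for functions `T j` whose nonempty level sets have measure at least `ρ ^ j`
and which have a common majorant `W`. -/
theorem level_set_sum {α : Type*} [MeasurableSpace α] (μ : Measure α) {q θ : ℝ} (hq : 1 < q)
    (hθ : 0 < θ) (hqθ : 1 / q + θ = 1) {ρ : ℝ≥0∞} (T : ℕ → α → ℝ) (hT : ∀ j, Measurable (T j))
    (hT0 : ∀ j x, 0 ≤ T j x) (W : α → ℝ) (hW : Measurable W) (hW0 : ∀ x, 0 ≤ W x)
    (hTW : ∀ j, ∀ᵐ x ∂μ, T j x ≤ W x)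
    (hlev : ∀ j t, μ {x | t < T j x} = 0 ∨ ρ ^ j ≤ μ {x | t < T j x}) :
    ∑' j, (ρ ^ θ) ^ j * (∫⁻ x, ENNReal.ofReal (T j x ^ q) ∂μ) ^ (1 / q) ≤
      ENNReal.ofReal q ^ (1 / q) * ((1 - ρ ^ θ)⁻¹ * ∫⁻ x, ENNReal.ofReal (W x) ∂μ) := by
  have hq0 : 0 < q := by linarith
  have hmeas : ∀ f : α → ℝ, Measurable fun t : ℝ => μ {x | t < f x} := fun f =>
    Antitone.measurable fun s t hst => measure_mono fun x hx => lt_of_le_of_lt hst hx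
  calc _ ≤ ∑' j, ENNReal.ofReal q ^ (1 / q) *
        ∫⁻ t in Set.Ioi (0 : ℝ), (ρ ^ θ) ^ j * μ {x | t < T j x} ^ (1 / q) := by
        refine ENNReal.tsum_le_tsum fun j => ?_
        rw [lintegral_const_mul _ ((hmeas _).pow_const _), mul_left_comm]
        gcongr
        exact lorentz_bound μ hq _ (hT j) (hT0 j)
    _ = ENNReal.ofReal q ^ (1 / q) *
        ∫⁻ t in Set.Ioi (0 : ℝ), ∑' j, (ρ ^ θ) ^ j * μ {x | t < T j x} ^ (1 / q) := by
        rw [ENNReal.tsum_mul_left, lintegral_tsum]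
        exact fun j => (((hmeas _).pow_const _).const_mul _).aemeasurable
    _ ≤ ENNReal.ofReal q ^ (1 / q) *
        ∫⁻ t in Set.Ioi (0 : ℝ), (1 - ρ ^ θ)⁻¹ * μ {x | t < W x} := by
        gcongr with t
        refine geom_sum_bound hθ _ (by positivity) hqθ (fun j => ?_) fun j => hlev j t
        refine measure_mono_ae ?_
        filter_upwards [hTW j] with x hx hx' using lt_of_lt_of_le hx' hx
    _ = _ := by
        rw [lintegral_const_mul _ (hmeas _),
          lintegral_eq_lintegral_meas_lt μ (Filter.Eventually.of_forall hW0) hW.aemeasurable]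

/-! ### Dyadic cubes -/

/-- The index `m` of the unique cube `Q_{j,m}` of level `j` that contains `x`. -/
def cubeIdx (n j : ℕ) (x : EuclideanSpace ℝ (Fin n)) : Fin n → ℤ :=
  fun i => ⌊x i / (2 : ℝ) ^ (-(j : ℝ)) + 1 / 2⌋

theorem mem_Qcube_iff {n j : ℕ} {m : Fin n → ℤ} {x : EuclideanSpace ℝ (Fin n)} :
    x ∈ Qcube n j m ↔ cubeIdx n j x = m := by
  have hδ : (0 : ℝ) < (2 : ℝ) ^ (-(j : ℝ)) := by positivity
  simp only [Qcube, Set.mem_ofPred_eq, funext_iff, cubeIdx, Int.floor_eq_iff]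
  refine forall_congr' fun i => and_congr ?_ ?_
  · rw [← sub_le_iff_le_add, le_div_iff₀' hδ]
  · rw [← lt_sub_iff_add_lt, div_lt_iff₀' hδ]
    ring_nf

theorem self_mem_Qcube {n j : ℕ} (x : EuclideanSpace ℝ (Fin n)) :
    x ∈ Qcube n j (cubeIdx n j x) := mem_Qcube_iff.2 rfl

theorem measurable_cubeIdx (n j : ℕ) : Measurable (cubeIdx n j) := by
  refine measurable_pi_lambda _ fun i => Int.measurable_floor.comp ?_
  fun_prop

theorem measurableSet_Qcube (n j : ℕ) (m : Fin n → ℤ) : MeasurableSet (Qcube n j m) := by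
  have : Qcube n j m = cubeIdx n j ⁻¹' {m} := by
    ext x; simp [mem_Qcube_iff]
  rw [this]
  exact measurable_cubeIdx n j (measurableSet_singleton m)

theorem volume_Qcube (n j : ℕ) (m : Fin n → ℤ) :
    volume (Qcube n j m) = ((2 : ℝ≥0∞)⁻¹ ^ n) ^ j := by
  have h := PiLp.volume_preserving_ofLp (Fin n)
  have hQ : Qcube n j m = WithLp.ofLp ⁻¹' (Set.univ.pi fun i =>
      Set.Ico ((2 : ℝ) ^ (-(j : ℝ)) * ((m i : ℝ) - 1 / 2))
        ((2 : ℝ) ^ (-(j : ℝ)) * ((m i : ℝ) + 1 / 2))) := by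
    ext x; simp [Qcube]
  rw [hQ, h.measure_preimage (MeasurableSet.univ_pi fun i => measurableSet_Ico).nullMeasurableSet,
    Real.volume_pi_Ico]
  have : ∀ i, ENNReal.ofReal ((2 : ℝ) ^ (-(j : ℝ)) * ((m i : ℝ) + 1 / 2) -
      (2 : ℝ) ^ (-(j : ℝ)) * ((m i : ℝ) - 1 / 2)) = (2 : ℝ≥0∞)⁻¹ ^ j := by
    intro i
    have : (2 : ℝ) ^ (-(j : ℝ)) * ((m i : ℝ) + 1 / 2) -
      (2 : ℝ) ^ (-(j : ℝ)) * ((m i : ℝ) - 1 / 2) = (2⁻¹ : ℝ) ^ j := by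
      rw [Real.rpow_neg (by norm_num), Real.rpow_natCast, inv_pow]; ring
    rw [this, ENNReal.ofReal_pow (by norm_num), ENNReal.ofReal_inv_of_pos (by norm_num)]
    simp
  simp only [this, Finset.prod_const, Finset.card_univ, Fintype.card_fin]
  rw [← pow_mul, ← pow_mul, mul_comm]

theorem gBlock_eq {n : ℕ} (γ : ℕ → (Fin n → ℤ) → ℂ) (j : ℕ) (x : EuclideanSpace ℝ (Fin n)) :
    gBlock γ j x = ‖γ j (cubeIdx n j x)‖₊ := by
  rw [gBlock, tsum_eq_single (cubeIdx n j x)]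
  · rw [Set.indicator_of_mem (self_mem_Qcube x), mul_one]
  · intro m hm
    rw [Set.indicator_of_notMem (fun h => hm (mem_Qcube_iff.1 h).symm), mul_zero]

theorem dist_le_of_mem_Qcube {n j : ℕ} {m : Fin n → ℤ} {x y : EuclideanSpace ℝ (Fin n)}
    (hx : x ∈ Qcube n j m) (hy : y ∈ Qcube n j m) : dist x y ≤ n * (2 : ℝ)⁻¹ ^ j := by
  rw [EuclideanSpace.dist_eq]
  refine Real.sqrt_le_iff.2 ⟨by positivity, ?_⟩
  have hδ : (2 : ℝ) ^ (-(j : ℝ)) = (2⁻¹ : ℝ) ^ j := by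
    rw [Real.rpow_neg (by norm_num), Real.rpow_natCast, inv_pow]
  calc ∑ i, dist (x i) (y i) ^ 2 ≤ ∑ _i : Fin n, ((2 : ℝ)⁻¹ ^ j) ^ 2 := by
        refine Finset.sum_le_sum fun i _ => ?_
        gcongr
        have h1 := hx i
        have h2 := hy i
        rw [hδ] at h1 h2
        rw [Real.dist_eq, abs_le]
        constructor <;> linarith
    _ = n * ((2 : ℝ)⁻¹ ^ j) ^ 2 := by simp
    _ ≤ (n * (2 : ℝ)⁻¹ ^ j) ^ 2 := by
        rw [mul_pow]
        gcongr
        rcases Nat.eq_zero_or_pos n with h | h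
        · simp [h]
        · have : (1 : ℝ) ≤ n := by exact_mod_cast h
          nlinarith

/-! ### Comparing variable powers on a cube -/

/-- The oscillation of `p` on a cube of level `j` is `O(1 / j)`, by local log-Hölder continuity of
`1 / p` and boundedness of `p`. -/
theorem exponent_osc {n : ℕ} (hn : 0 < n) {p : EuclideanSpace ℝ (Fin n) → ℝ} {c b : ℝ}
    (hc : 0 < c) (hlow : ∀ x, c ≤ p x) (hup : ∀ x, p x ≤ b)
    (hinv : GlobLogHolder fun x => 1 / p x) :
    ∃ L : ℝ, 0 ≤ L ∧ ∀ j m, ∀ x ∈ Qcube n j m, ∀ y ∈ Qcube n j m, j * |p x - p y| ≤ L := by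
  obtain ⟨⟨c₁, hc₁, hlip⟩, -⟩ := hinv
  have hn1 : (1 : ℝ) ≤ n := by exact_mod_cast hn
  have hlogn : 0 ≤ Real.log n := Real.log_nonneg hn1
  have hlog2 : 0 < Real.log 2 := Real.log_pos (by norm_num)
  refine ⟨b ^ 2 * (c₁ * ((1 + Real.log n) / Real.log 2)), by positivity, ?_⟩
  intro j m x hx y hy
  rcases eq_or_ne x y with rfl | hxy
  · simp only [sub_self, abs_zero, mul_zero]; positivity
  have hd : 0 < dist x y := dist_pos.2 hxy
  set ℓ := Real.log (Real.exp 1 + 1 / dist x y) with hℓ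
  have hℓ1 : 1 ≤ ℓ := by
    rw [← Real.log_exp 1]
    exact Real.log_le_log (Real.exp_pos 1) (by simp [hd.le])
  have hjℓ : j * Real.log 2 ≤ (1 + Real.log n) * ℓ := by
    have h1 : (2 : ℝ) ^ j / n ≤ Real.exp 1 + 1 / dist x y := by
      have h2 : (2 : ℝ) ^ j / n ≤ 1 / dist x y := by
        rw [div_le_div_iff₀ (by positivity) hd, one_mul]
        calc (2 : ℝ) ^ j * dist x y ≤ 2 ^ j * (n * (2 : ℝ)⁻¹ ^ j) := by
              gcongr; exact dist_le_of_mem_Qcube hx hy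
          _ = n := by rw [inv_pow]; field_simp
      linarith [Real.exp_pos 1]
    have h3 := Real.log_le_log (by positivity) h1
    rw [Real.log_div (by positivity) (by positivity), Real.log_pow, ← hℓ] at h3
    nlinarith
  have hpx : 0 < p x := hc.trans_le (hlow x)
  have hpy : 0 < p y := hc.trans_le (hlow y)
  have hdiff : |p x - p y| ≤ b ^ 2 * (c₁ / ℓ) := by
    have h1 : p x - p y = -(p x * p y * (1 / p x - 1 / p y)) := by field_simp; ring
    rw [h1, abs_neg, abs_mul, abs_of_pos (mul_pos hpx hpy), sq]
    have hb : 0 ≤ b := hpx.le.trans (hup x)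
    gcongr
    · exact hup x
    · exact hup y
    · exact hlip x y
  calc j * |p x - p y| ≤ j * (b ^ 2 * (c₁ / ℓ)) := by gcongr
    _ = b ^ 2 * (c₁ * (j / ℓ)) := by ring
    _ ≤ _ := by
      have : j / ℓ ≤ (1 + Real.log n) / Real.log 2 := by
        rw [div_le_div_iff₀ (by linarith) hlog2]
        exact hjℓ
      gcongr ?_ * (?_ * ?_)

/-- A base between `2 ^ (-j)` and `2 ^ (j R)` changes its powers only by a bounded factor when the
exponent changes by `O(1 / j)`. -/
theorem rpow_comparison {a : ℝ≥0∞} {j : ℕ} {R L s t : ℝ} (hR : 1 ≤ R)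
    (hlo : (2 : ℝ≥0∞) ^ (-(j : ℝ)) ≤ a) (hhi : a ≤ (2 : ℝ≥0∞) ^ (j * R))
    (hL : j * |s - t| ≤ L) : a ^ s ≤ (2 : ℝ≥0∞) ^ (R * L) * a ^ t := by
  have ha0 : a ≠ 0 := by
    have : (0 : ℝ≥0∞) < (2 : ℝ≥0∞) ^ (-(j : ℝ)) := ENNReal.rpow_pos (by norm_num) (by norm_num)
    exact (this.trans_le hlo).ne'
  have haT : a ≠ ⊤ := by
    refine (hhi.trans_lt (ENNReal.rpow_lt_top_of_nonneg (by positivity) (by norm_num))).ne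
  have hs : a ^ s = a ^ (s - t) * a ^ t := by
    rw [← ENNReal.rpow_add _ _ ha0 haT, sub_add_cancel]
  rw [hs]
  gcongr
  have hj : (0 : ℝ) ≤ j := Nat.cast_nonneg j
  have hL0 : 0 ≤ L := (by positivity : (0 : ℝ) ≤ j * |s - t|).trans hL
  rcases le_total t s with h | h
  · rw [abs_of_nonneg (by linarith)] at hL
    calc a ^ (s - t) ≤ ((2 : ℝ≥0∞) ^ (j * R)) ^ (s - t) :=
          ENNReal.rpow_le_rpow hhi (by linarith)
      _ = (2 : ℝ≥0∞) ^ (R * (j * (s - t))) := by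
          rw [← ENNReal.rpow_mul]; congr 1; ring
      _ ≤ _ := ENNReal.rpow_le_rpow_of_exponent_le (by norm_num) (by gcongr)
  · rw [abs_of_nonpos (by linarith)] at hL
    calc a ^ (s - t) = (a ^ (t - s))⁻¹ := by rw [← ENNReal.rpow_neg, neg_sub]
      _ ≤ (((2 : ℝ≥0∞) ^ (-(j : ℝ))) ^ (t - s))⁻¹ :=
          ENNReal.inv_le_inv.2 (ENNReal.rpow_le_rpow hlo (by linarith))
      _ = (2 : ℝ≥0∞) ^ (j * (t - s)) := by
          rw [← ENNReal.rpow_mul, ← ENNReal.rpow_neg]; congr 1; ring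
      _ ≤ _ := ENNReal.rpow_le_rpow_of_exponent_le (by norm_num) (by nlinarith)

/-- A bounded modular on a single cube bounds the coefficient, because the cube has measure
`2 ^ (-n j)`. The maximum with `1` covers
coefficients `a ≤ 1` and provides the condition `1 ≤ R` of `rpow_comparison`. -/
theorem coeff_le_of_lintegral_le_one {n j : ℕ} {m : Fin n → ℤ}
    {p : EuclideanSpace ℝ (Fin n) → ℝ} {c : ℝ} (hc : 0 < c) (hlow : ∀ x, c ≤ p x) {a : ℝ≥0∞}
    (ha : ∫⁻ x in Qcube n j m, a ^ p x ≤ 1) : a ≤ (2 : ℝ≥0∞) ^ ((j : ℝ) * (max 1 (n / c))) := by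
  rcases le_total a 1 with h1 | h1
  · refine h1.trans ?_
    rw [← ENNReal.rpow_zero (x := 2)]
    exact ENNReal.rpow_le_rpow_of_exponent_le (by norm_num) (by positivity)
  · have h2 : a ^ c * ((2 : ℝ≥0∞)⁻¹ ^ n) ^ j ≤ 1 := by
      rw [← volume_Qcube n j m, ← setLIntegral_const]
      refine le_trans ?_ ha
      exact lintegral_mono fun x => ENNReal.rpow_le_rpow_of_exponent_le h1 (hlow x)
    rw [← pow_mul, ← ENNReal.inv_pow, ← div_eq_mul_inv] at h2
    have h3 : a ^ c ≤ (2 : ℝ≥0∞) ^ (n * j) := by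
      have := (ENNReal.div_le_iff (by positivity) (by finiteness)).1 h2
      rwa [one_mul] at this
    calc a = (a ^ c) ^ (1 / c) := by
          rw [← ENNReal.rpow_mul, mul_one_div_cancel hc.ne', ENNReal.rpow_one]
      _ ≤ ((2 : ℝ≥0∞) ^ (n * j)) ^ (1 / c) := by gcongr
      _ = (2 : ℝ≥0∞) ^ ((j : ℝ) * (n / c)) := by
          rw [← ENNReal.rpow_natCast, ← ENNReal.rpow_mul]; congr 1; push_cast; ring
      _ ≤ _ := ENNReal.rpow_le_rpow_of_exponent_le (by norm_num) (by gcongr; exact le_max_right _ _)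

/-! ### The embedding -/

/-- The embedding in modular form, for normalised coefficients `a j m = |γ_{j,m}| / λ`. The constant
`S` depends only on `n`, `ε`, `p`. -/
theorem modular_bound {n : ℕ} (hn : 0 < n) {ε : ℝ} (hε : 0 < ε)
    {p : EuclideanSpace ℝ (Fin n) → ℝ} {c b : ℝ} (hc : 0 < c)
    (hlow : ∀ x, c ≤ p x) (hup : ∀ x, p x ≤ b) (hpmeas : Measurable p)
    (hinv : GlobLogHolder fun x => 1 / p x) :
    ∃ S : ℝ≥0∞, S ≠ ⊤ ∧ ∀ a : ℕ → (Fin n → ℤ) → ℝ≥0∞, (∀ j m, a j m ≠ ⊤) →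
      (∫⁻ x, ⨆ j : ℕ, (2 : ℝ≥0∞) ^ ((j : ℝ) * n * (ε / (1 + ε))) *
        a j (cubeIdx n j x) ^ p x) ≤ 1 →
      ∑' j, (∫⁻ x, (a j (cubeIdx n j x) ^ p x) ^ (1 + ε)) ^ (1 / (1 + ε)) ≤ S := by
  obtain ⟨L, hL0, hL⟩ := exponent_osc hn hc hlow hup hinv
  have hp0 : ∀ x, 0 < p x := fun x => hc.trans_le (hlow x)
  set q : ℝ := 1 + ε with hq
  have hq1 : 1 < q := by linarith
  have hq0 : 0 < q := by linarith
  set θ : ℝ := ε / q with hθ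
  have hθ0 : 0 < θ := by positivity
  have hqθ : 1 / q + θ = 1 := by rw [hθ]; field_simp; exact hq.symm
  set ρ : ℝ≥0∞ := (2 : ℝ≥0∞)⁻¹ ^ n with hρ
  set R : ℝ := max 1 (n / c) with hR
  have hR1 : 1 ≤ R := le_max_left _ _
  set K : ℝ≥0∞ := (2 : ℝ≥0∞) ^ (R * L) with hK
  have hKtop : K ≠ ⊤ := (ENNReal.rpow_lt_top_of_nonneg (by positivity) (by norm_num)).ne
  have hgeom : ∀ {r : ℝ≥0∞}, r < 1 → (1 - r)⁻¹ ≠ ⊤ := fun hr =>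
    ENNReal.inv_ne_top.2 (tsub_pos_of_lt hr).ne'
  have hρ1 : ρ ^ θ < 1 := by
    refine ENNReal.rpow_lt_one ?_ hθ0
    exact pow_lt_one₀ (by positivity) (by norm_num) hn.ne'
  set σ : ℝ≥0∞ := (2 : ℝ≥0∞) ^ (-(c * θ)) with hσ
  have hσ1 : σ < 1 := ENNReal.rpow_lt_one_of_one_lt_of_neg (by norm_num) (by
    have := mul_pos hc hθ0; linarith)
  refine ⟨(1 - σ)⁻¹ + K * (ENNReal.ofReal q ^ (1 / q) * (1 - ρ ^ θ)⁻¹), ?_, ?_⟩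
  · have := hgeom hσ1
    have := hgeom hρ1
    have : ENNReal.ofReal q ^ (1 / q) ≠ ⊤ :=
      (ENNReal.rpow_lt_top_of_nonneg (by positivity) ENNReal.ofReal_ne_top).ne
    finiteness
  intro a ha hint
  -- the block modulars `G j`, and their minorants `v j`, constant on the cubes of level `j`
  set G : ℕ → EuclideanSpace ℝ (Fin n) → ℝ≥0∞ := fun j x => a j (cubeIdx n j x) ^ p x with hG
  set v : ℕ → (Fin n → ℤ) → ℝ≥0∞ := fun j m => ⨅ y ∈ Qcube n j m, a j m ^ p y with hv
  have hGmeas : ∀ j, Measurable (G j) := fun j =>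
    (Measurable.of_discrete.comp (measurable_cubeIdx n j)).pow hpmeas
  have hvG : ∀ j x, v j (cubeIdx n j x) ≤ G j x := fun j x =>
    iInf₂_le x (self_mem_Qcube x)
  have hGtop : ∀ j x, G j x ≠ ⊤ := fun j x =>
    (ENNReal.rpow_lt_top_of_nonneg (hp0 x).le (ha _ _)).ne
  have hvtop : ∀ j x, v j (cubeIdx n j x) ≠ ⊤ := fun j x => ne_top_of_le_ne_top (hGtop j x) (hvG j x)
  set w : ℕ → ℝ≥0∞ := fun j => (2 : ℝ≥0∞) ^ ((j : ℝ) * n * θ) with hw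
  have hw1 : ∀ j, 1 ≤ w j := fun j => by
    rw [hw, ← ENNReal.rpow_zero (x := 2)]
    exact ENNReal.rpow_le_rpow_of_exponent_le (by norm_num) (by positivity)
  have hwtop : ∀ j, w j ≠ ⊤ := fun j =>
    (ENNReal.rpow_lt_top_of_nonneg (by positivity) (by norm_num)).ne
  have hρw : ∀ j, (ρ ^ θ) ^ j * w j = 1 := fun j => by
    have : (ρ ^ θ) ^ j = (w j)⁻¹ := by
      rw [hρ, hw, ← ENNReal.rpow_natCast, ← ENNReal.rpow_natCast, ← ENNReal.rpow_mul,
        ← ENNReal.rpow_mul, ENNReal.inv_rpow]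
      congr 2; ring
    rw [this, ENNReal.inv_mul_cancel (by have := hw1 j; positivity) (hwtop j)]
  have hGint : ∀ j, ∫⁻ x, G j x ≤ 1 := fun j => by
    refine le_trans (lintegral_mono fun x => ?_) hint
    exact (le_mul_of_one_le_left' (hw1 j)).trans (le_iSup (fun j => w j * G j x) j)
  -- upper bound for the coefficients
  have hahi : ∀ j m, a j m ≤ (2 : ℝ≥0∞) ^ (j * R) := fun j m => by
    refine coeff_le_of_lintegral_le_one (m := m) hc hlow (le_trans ?_ (hGint j))
    refine le_trans (le_of_eq ?_) (setLIntegral_le_lintegral (Qcube n j m) _)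
    refine setLIntegral_congr_fun (measurableSet_Qcube n j m) fun x hx => ?_
    simp only [hG, mem_Qcube_iff.1 hx]
  -- coefficients below `2⁻ʲ` gain decay in `j`; for the others `G j` is almost constant on cubes
  have hpt : ∀ j x, G j x ^ q ≤ (σ ^ j) ^ q * G j x + K ^ q * v j (cubeIdx n j x) ^ q := by
    intro j x
    rcases le_total (a j (cubeIdx n j x)) ((2 : ℝ≥0∞) ^ (-(j : ℝ))) with h | h
    · refine le_add_right ?_
      have h1 : G j x ≤ (2 : ℝ≥0∞) ^ (-(j : ℝ) * c) := by
        calc G j x ≤ ((2 : ℝ≥0∞) ^ (-(j : ℝ))) ^ p x := ENNReal.rpow_le_rpow h (hp0 x).le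
          _ = (2 : ℝ≥0∞) ^ (-(j : ℝ) * p x) := by rw [ENNReal.rpow_mul]
          _ ≤ _ := ENNReal.rpow_le_rpow_of_exponent_le (by norm_num) (by
              have := mul_le_mul_of_nonneg_left (hlow x) (Nat.cast_nonneg (α := ℝ) j)
              linarith)
      calc G j x ^ q = G j x ^ ε * G j x := by
            rw [hq, add_comm, ENNReal.rpow_add_of_nonneg _ _ hε.le zero_le_one, ENNReal.rpow_one]
        _ ≤ ((2 : ℝ≥0∞) ^ (-(j : ℝ) * c)) ^ ε * G j x := by gcongr
        _ = (σ ^ j) ^ q * G j x := by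
            rw [hσ, ← ENNReal.rpow_natCast, ← ENNReal.rpow_mul, ← ENNReal.rpow_mul,
              ← ENNReal.rpow_mul, hθ]
            congr 2; field_simp
    · refine le_add_left ?_
      rw [← ENNReal.mul_rpow_of_nonneg _ _ hq0.le]
      refine ENNReal.rpow_le_rpow ?_ hq0.le
      have hK0 : K ≠ 0 := (ENNReal.rpow_pos (by norm_num) (by norm_num) : 0 < K).ne'
      simp only [hv]
      rw [ENNReal.mul_iInf_of_ne hK0 hKtop]
      refine le_iInf fun y => ?_
      rw [ENNReal.mul_iInf_of_ne hK0 hKtop]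
      exact le_iInf fun hy => rpow_comparison hR1 h (hahi _ _)
        (hL j _ x (self_mem_Qcube x) y hy)
  have hvmeas : ∀ j, Measurable fun x => v j (cubeIdx n j x) := fun j =>
    (Measurable.of_discrete (f := v j)).comp (measurable_cubeIdx n j)
  have hterm : ∀ j, (∫⁻ x, G j x ^ q) ^ (1 / q) ≤
      σ ^ j + K * (∫⁻ x, v j (cubeIdx n j x) ^ q) ^ (1 / q) := by
    intro j
    have hinvq : ∀ z : ℝ≥0∞, (z ^ q) ^ (1 / q) = z := fun z => by
      rw [← ENNReal.rpow_mul, mul_one_div_cancel hq0.ne', ENNReal.rpow_one]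
    calc (∫⁻ x, G j x ^ q) ^ (1 / q)
        ≤ ((σ ^ j) ^ q + K ^ q * ∫⁻ x, v j (cubeIdx n j x) ^ q) ^ (1 / q) := by
          refine ENNReal.rpow_le_rpow ?_ (by positivity)
          calc _ ≤ ∫⁻ x, ((σ ^ j) ^ q * G j x + K ^ q * v j (cubeIdx n j x) ^ q) :=
                lintegral_mono (hpt j)
            _ = (σ ^ j) ^ q * (∫⁻ x, G j x) + K ^ q * ∫⁻ x, v j (cubeIdx n j x) ^ q := by
                rw [lintegral_add_left ((hGmeas j).const_mul _), lintegral_const_mul _ (hGmeas j),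
                  lintegral_const_mul _ ((hvmeas j).pow_const _)]
            _ ≤ _ := by
                gcongr
                exact mul_le_of_le_one_right' (hGint j)
      _ ≤ ((σ ^ j) ^ q) ^ (1 / q) + (K ^ q * ∫⁻ x, v j (cubeIdx n j x) ^ q) ^ (1 / q) :=
          ENNReal.rpow_add_le_add_rpow _ _ (by positivity) (by
            rw [div_le_one hq0]; exact hq1.le)
      _ = _ := by
          rw [ENNReal.mul_rpow_of_nonneg _ _ (by positivity), hinvq, hinvq]
  -- the level set estimate, applied to the normalised minorants
  set T : ℕ → EuclideanSpace ℝ (Fin n) → ℝ≥0∞ := fun j x => w j * v j (cubeIdx n j x) with hT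
  have hTmeas : ∀ j, Measurable (T j) := fun j => (hvmeas j).const_mul _
  have hTtop : ∀ j x, T j x ≠ ⊤ := fun j x => ENNReal.mul_ne_top (hwtop j) (hvtop j x)
  have hWmeas : Measurable fun x => ⨆ j, T j x := Measurable.iSup hTmeas
  have hWint : ∫⁻ x, ⨆ j, T j x ≤ 1 := by
    refine le_trans (lintegral_mono fun x => iSup_mono fun j => ?_) hint
    exact mul_le_mul_right (hvG j x) (w j)
  have hWfin : ∀ᵐ x, ⨆ j, T j x < ⊤ :=
    ae_lt_top hWmeas (ne_top_of_le_ne_top one_ne_top hWint)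
  have hlevel := level_set_sum volume hq1 hθ0 hqθ (ρ := ρ) (fun j x => (T j x).toReal)
    (fun j => (hTmeas j).ennreal_toReal) (fun _ _ => ENNReal.toReal_nonneg)
    (fun x => (⨆ j, T j x).toReal) hWmeas.ennreal_toReal (fun _ => ENNReal.toReal_nonneg)
    (fun j => by
      filter_upwards [hWfin] with x hx
      exact ENNReal.toReal_mono hx.ne (le_iSup (fun j => T j x) j))
    (fun j t => by
      rcases Set.eq_empty_or_nonempty {x | t < (T j x).toReal} with h | ⟨x, hx⟩
      · left; rw [h, measure_empty]
      · right
        rw [hρ, ← volume_Qcube n j (cubeIdx n j x)]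
        refine measure_mono fun y hy => ?_
        have hxy : T j y = T j x := by simp only [hT, mem_Qcube_iff.1 hy]
        change t < (T j y).toReal
        rw [hxy]; exact hx)
  have hW1 : ∫⁻ x, ENNReal.ofReal (⨆ j, T j x).toReal ≤ 1 := by
    refine le_trans (lintegral_mono fun x => ENNReal.ofReal_toReal_le) hWint
  have hsumv : ∑' j, (∫⁻ x, v j (cubeIdx n j x) ^ q) ^ (1 / q) ≤
      ENNReal.ofReal q ^ (1 / q) * (1 - ρ ^ θ)⁻¹ := by
    calc _ = ∑' j, (ρ ^ θ) ^ j *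
          (∫⁻ x, ENNReal.ofReal ((T j x).toReal ^ q)) ^ (1 / q) := by
          refine tsum_congr fun j => ?_
          have h1 : ∀ x, ENNReal.ofReal ((T j x).toReal ^ q) =
              w j ^ q * v j (cubeIdx n j x) ^ q := fun x => by
            rw [← ENNReal.ofReal_rpow_of_nonneg ENNReal.toReal_nonneg hq0.le,
              ENNReal.ofReal_toReal (hTtop j x), ENNReal.mul_rpow_of_nonneg _ _ hq0.le]
          simp only [h1]
          rw [lintegral_const_mul _ ((hvmeas j).pow_const _),
            ENNReal.mul_rpow_of_nonneg _ _ (by positivity), ← ENNReal.rpow_mul,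
            mul_one_div_cancel hq0.ne', ENNReal.rpow_one, ← mul_assoc, hρw, one_mul]
      _ ≤ _ := hlevel
      _ ≤ _ := by
          gcongr
          exact mul_le_of_le_one_right' hW1
  calc ∑' j, (∫⁻ x, G j x ^ q) ^ (1 / q)
      ≤ ∑' j, (σ ^ j + K * (∫⁻ x, v j (cubeIdx n j x) ^ q) ^ (1 / q)) :=
        ENNReal.tsum_le_tsum hterm
    _ = (1 - σ)⁻¹ + K * ∑' j, (∫⁻ x, v j (cubeIdx n j x) ^ q) ^ (1 / q) := by
        rw [ENNReal.tsum_add, ENNReal.tsum_geometric, ENNReal.tsum_mul_left]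
    _ ≤ _ := by gcongr

/-- **Key embedding in the proof of the variable-exponent Jawerth theorem.**
For `ε > 0` and `p ∈ P^{log}` with `0 < inf p ≤ sup p < ∞`, one has
`f^{(n/p(·))(ε/(1+ε))}_{p(·),∞}(ℝⁿ) ↪ b^0_{(1+ε)p(·),p(·)}(ℝⁿ)`, where the `f`-quasinorm
of `γ` equals `‖h | L_{p(·)}‖` with
`h(x) = sup_{j,m} 2^{(jn/p(x))(ε/(1+ε))} |γ_{j,m}| χ_{j,m}(x)`. -/
theorem jawerth_key_embedding_variable (n : ℕ) (hn : 0 < n) (ε : ℝ) (hε : 0 < ε)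
    (p : EuclideanSpace ℝ (Fin n) → ℝ) (c b : ℝ) (hc : 0 < c)
    (hlow : ∀ x, c ≤ p x) (hup : ∀ x, p x ≤ b) (hpmeas : Measurable p)
    (hinv : GlobLogHolder fun x => 1 / p x) :
    ∃ C : ℝ≥0, 0 < C ∧ ∀ γ : ℕ → (Fin n → ℤ) → ℂ,
      bNormZero ε p γ ≤ C *
        luxNormR p (fun x => ⨆ (j : ℕ) (m : Fin n → ℤ),
          (2 : ℝ≥0∞) ^ (((j : ℝ) * n / p x) * (ε / (1 + ε))) * (‖γ j m‖₊ : ℝ≥0∞) *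
            (Qcube n j m).indicator (fun _ => (1 : ℝ≥0∞)) x) := by
  obtain ⟨S, hS, hmod⟩ := modular_bound hn hε hc hlow hup hpmeas hinv
  have hp0 : ∀ x, 0 < p x := fun x => hc.trans_le (hlow x)
  -- `C ≥ 1` with `C ^ c ≥ S`, so that dividing by `C` divides the modular by at least `S`
  set C : ℝ≥0 := (max 1 S.toNNReal) ^ (1 / c) with hC
  have hC1 : 1 ≤ C := NNReal.one_le_rpow (le_max_left _ _) (by positivity)
  have hC0 : 0 < C := one_pos.trans_le hC1
  have hC1' : (1 : ℝ≥0∞) ≤ C := by exact_mod_cast hC1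
  have hC0' : (C : ℝ≥0∞) ≠ 0 := by exact_mod_cast hC0.ne'
  have hCS : S ≤ (C : ℝ≥0∞) ^ c := by
    rw [← ENNReal.coe_rpow_of_nonneg _ hc.le, hC, ← NNReal.rpow_mul, one_div_mul_cancel hc.ne',
      NNReal.rpow_one, ← ENNReal.coe_toNNReal hS]
    exact_mod_cast le_max_right _ _
  refine ⟨C, hC0, fun γ => ?_⟩
  rw [mul_comm, ← ENNReal.div_le_iff_le_mul (Or.inl hC0') (Or.inl ENNReal.coe_ne_top)]
  refine le_sInf fun lam hlam => ?_
  obtain ⟨hlam0, hlam1⟩ := hlam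
  rw [ENNReal.div_le_iff_le_mul (Or.inl hC0') (Or.inl ENNReal.coe_ne_top)]
  set a : ℕ → (Fin n → ℤ) → ℝ≥0∞ := fun j m => (‖γ j m‖₊ : ℝ≥0∞) / lam with ha
  have hbound := hmod a (fun j m => ENNReal.div_ne_top ENNReal.coe_ne_top hlam0.ne') (by
    refine le_trans (lintegral_mono fun x => iSup_le fun j => ?_) hlam1
    have h1 : (2 : ℝ≥0∞) ^ ((j : ℝ) * n * (ε / (1 + ε))) =
        ((2 : ℝ≥0∞) ^ (((j : ℝ) * n / p x) * (ε / (1 + ε)))) ^ p x := by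
      rw [← ENNReal.rpow_mul]
      congr 1
      have := (hp0 x).ne'
      field_simp
    rw [h1, ← ENNReal.mul_rpow_of_nonneg _ _ (hp0 x).le, ha, ← mul_div_assoc]
    refine ENNReal.rpow_le_rpow (ENNReal.div_le_div_right ?_ _) (hp0 x).le
    refine le_iSup₂_of_le j (cubeIdx n j x) ?_
    rw [Set.indicator_of_mem (self_mem_Qcube x), mul_one])
  refine sInf_le ⟨ENNReal.mul_pos hlam0.ne' hC0', ?_⟩
  have hq0 : 0 < 1 + ε := by linarith
  calc ∑' j : ℕ, (∫⁻ x, ((gBlock γ j x / (lam * C)) ^ p x) ^ (1 + ε)) ^ (1 / (1 + ε))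
      ≤ ∑' j : ℕ, ((C : ℝ≥0∞) ^ c)⁻¹ *
          (∫⁻ x, (a j (cubeIdx n j x) ^ p x) ^ (1 + ε)) ^ (1 / (1 + ε)) := by
        refine ENNReal.tsum_le_tsum fun j => ?_
        have hpt : ∀ x, ((gBlock γ j x / (lam * C)) ^ p x) ^ (1 + ε) ≤
            (((C : ℝ≥0∞) ^ c)⁻¹) ^ (1 + ε) * (a j (cubeIdx n j x) ^ p x) ^ (1 + ε) := fun x => by
          rw [← ENNReal.mul_rpow_of_nonneg _ _ hq0.le]
          refine ENNReal.rpow_le_rpow ?_ hq0.le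
          rw [gBlock_eq, div_eq_mul_inv, ENNReal.mul_inv (Or.inl hlam0.ne')
            (Or.inr hC0'), ← mul_assoc, ← div_eq_mul_inv (_ : ℝ≥0∞) lam,
            ENNReal.mul_rpow_of_nonneg _ _ (hp0 x).le, mul_comm, ENNReal.inv_rpow]
          gcongr
          exact hlow x
        have hne : (((C : ℝ≥0∞) ^ c)⁻¹) ^ (1 + ε) ≠ ⊤ := by
          refine (ENNReal.rpow_lt_top_of_nonneg hq0.le (ENNReal.inv_ne_top.2 ?_)).ne
          exact (ENNReal.rpow_pos (pos_iff_ne_zero.2 hC0') ENNReal.coe_ne_top).ne'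
        calc _ ≤ ((((C : ℝ≥0∞) ^ c)⁻¹) ^ (1 + ε) *
              ∫⁻ x, (a j (cubeIdx n j x) ^ p x) ^ (1 + ε)) ^ (1 / (1 + ε)) := by
              refine ENNReal.rpow_le_rpow ?_ (by positivity)
              rw [← lintegral_const_mul' _ _ hne]
              exact lintegral_mono hpt
          _ = _ := by
              rw [ENNReal.mul_rpow_of_nonneg _ _ (by positivity), ← ENNReal.rpow_mul,
                mul_one_div_cancel hq0.ne', ENNReal.rpow_one]
    _ ≤ ((C : ℝ≥0∞) ^ c)⁻¹ * S := by
        rw [ENNReal.tsum_mul_left]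
        gcongr
    _ ≤ ((C : ℝ≥0∞) ^ c)⁻¹ * (C : ℝ≥0∞) ^ c := by gcongr
    _ ≤ 1 := ENNReal.inv_mul_le_one _

end
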